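/- arXiv:2312.03622 — 2 statements merged into one kernel-verified Lean document; each statement's English description precedes it below -/
import Mathlib

section
/- Let A ⊆ B be an inclusion of unital C*-algebras with A a closed *-subalgebra of B containing the unit 1_B. Then the following conditions are equivalent: (i) the inclusion A ⊆ B has real rank zero; (ii) for every self-adjoint a ∈ A and every ε > 0 there exists a self-adjoint b ∈ B whose spectrum is finite such that ‖a − b‖ ≤ ε; (iii) for every self-adjoint a ∈ A and every ε > 0 there exists an invertible self-adjoint b ∈ B such that ‖a − b‖ ≤ ε; (iv) for all positive x, y ∈ A with x·y = 0 and every ε > 0 there exists a projection p ∈ B such that ‖p·x − x‖ ≤ ε and ‖(1−p)·y − y‖ ≤ ε. -/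
open Filter Topology

section Defs

variable {B : Type*} [NonUnitalNormedRing B] [StarRing B] [PartialOrder B]

/-- A projection in a C*-algebra: a self-adjoint idempotent. -/
def IsProjection (p : B) : Prop := star p = p ∧ p * p = p

/-- The hereditary subalgebra `cl(a·S·a)`: the norm closure of `{a * b * a : b ∈ S}`. -/
def herSub (S : Set B) (a : B) : Set B := closure {x : B | ∃ b ∈ S, x = a * b * a}

/-- `T` has an approximate unit of projections: every positive `x ∈ T` is approximated
by `p * x` for projections `p ∈ T`. -/
def HasApproxUnitOfProjections (T : Set B) : Prop :=
  ∀ x ∈ T, 0 ≤ x → ∀ ε : ℝ, 0 < ε → ∃ p ∈ T, IsProjection p ∧ ‖p * x - x‖ < ε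

/-- The inclusion `A ⊆ S` of C*-algebras has real rank zero: for every nonzero positive
`a ∈ A`, the hereditary subalgebra `cl(a·S·a)` has an approximate unit of projections. -/
def InclusionRealRankZero (A S : Set B) : Prop :=
  ∀ a ∈ A, 0 ≤ a → a ≠ 0 → HasApproxUnitOfProjections (herSub S a)

end Defs

/-!
A real rank zero inclusion provides substitutes for the missing spectral projections. If `x` and `y`
are functions of a self-adjoint `a ∈ A` living above and below a gap in `ℝ`, a projection of `B`
separating them approximately is perturbed, by taking range projections twice, to one lying exactly
between `χ_{(t, ∞)}(a)` and `χ_{[s, ∞)}(a)`. One such projection with small positive `s < t` almost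
fixes `a ≥ 0` and belongs to the hereditary subalgebra of `a`. A decreasing chain of them along an
`ε`-grid, summed and scaled by `ε`, is a staircase approximating `a`; its spectrum is finite because
every earlier partial sum acts as a scalar on the range of the next projection. A finite spectrum
can be shifted off `0`, and conversely the spectral projection onto `(0, ∞)` of an invertible `b`
near `x - y` separates `x = (x - y)⁺` from `y = (x - y)⁻`.
-/

theorem isProjection_iff_isStarProjection {R : Type*} [NonUnitalNormedRing R] [StarRing R]
    {p : R} : IsProjection p ↔ IsStarProjection p :=
  ⟨fun h ↦ ⟨h.2, h.1⟩, fun h ↦ ⟨h.isSelfAdjoint, h.isIdempotentElem⟩⟩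

theorem exists_rangeProjection_of_isUnit {R : Type*} [Ring R] [StarRing R] {p v : R}
    (hp : IsStarProjection p) (hvp : v * p = v) (hu : IsUnit (star v * v + (1 - p))) :
    ∃ q : R, IsStarProjection q ∧ q * v = v ∧ ∃ c, q = v * c := by
  obtain ⟨u, hu⟩ := hu
  have hup : (u : R) * p = star v * v := by
    rw [hu, add_mul, hp.one_sub_mul_self, add_zero, mul_assoc, hvp]
  have hstar_u : star u = u := Units.ext <| by
    simp [hu, hp.isSelfAdjoint.star_eq]
  have hstar_inv : star (↑u⁻¹ : R) = ↑u⁻¹ := by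
    rw [← Units.coe_star, star_inv, hstar_u]
  have hqv : v * ↑u⁻¹ * star v * v = v := by
    rw [mul_assoc, ← hup, mul_assoc, Units.inv_mul_cancel_left, hvp]
  refine ⟨v * ↑u⁻¹ * star v, ⟨?_, ?_⟩, hqv, ↑u⁻¹ * star v, mul_assoc _ _ _⟩
  · rw [IsIdempotentElem, ← mul_assoc, ← mul_assoc, hqv]
  · simp [isSelfAdjoint_iff, hstar_inv, mul_assoc]

section CStarRing

variable {B : Type*} [NormedRing B] [StarRing B] [CStarRing B]

theorem norm_isStarProjection_mul_le {p : B} (hp : IsStarProjection p) (z : B) :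
    ‖p * z‖ ≤ ‖z‖ :=
  (norm_mul_le p z).trans (mul_le_of_le_one_left (norm_nonneg z) (hp.norm_le p))

theorem norm_isStarProjection_mul_sub_le {p : B} (hp : IsStarProjection p) (z : B) :
    ‖p * z - z‖ ≤ ‖z‖ := by
  simpa [sub_mul, norm_sub_rev] using norm_isStarProjection_mul_le hp.one_sub z

variable [CompleteSpace B]

theorem exists_rangeProjection_mul {p h : B} (hp : IsStarProjection p) (hh : IsSelfAdjoint h)
    (hh1 : ‖h‖ ≤ 1) (hph : ‖p * h - p‖ < 1 / 2) :
    ∃ q : B, IsStarProjection q ∧ q * (h * p) = h * p ∧ ∃ c, q = h * p * c := by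
  have hpp : p * p = p := hp.isIdempotentElem
  have hhp : ‖h * p‖ ≤ 1 :=
    (norm_mul_le h p).trans (mul_le_one₀ hh1 (norm_nonneg p) (hp.norm_le p))
  have hstar : star (h * p) * (h * p) = p * h * (h * p) := by
    rw [star_mul, hp.isSelfAdjoint.star_eq, hh.star_eq]
  have hnear : ‖p - p * h * (h * p)‖ < 1 :=
    calc ‖p - p * h * (h * p)‖ = ‖(p * h - p) * (h * p) + (p * h - p) * p‖ := by
          rw [← norm_neg]
          congr 1
          simp only [sub_mul, hpp, mul_assoc]
          abel
      _ ≤ ‖p * h - p‖ * ‖h * p‖ + ‖p * h - p‖ * ‖p‖ := norm_add_le_of_le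
          (norm_mul_le _ _) (norm_mul_le _ _)
      _ ≤ ‖p * h - p‖ * 1 + ‖p * h - p‖ * 1 := by gcongr; exact hp.norm_le p
      _ < 1 := by linarith
  refine exists_rangeProjection_of_isUnit hp (by rw [mul_assoc, hpp]) ?_
  rw [hstar]
  convert isUnit_one_sub_of_norm_lt_one hnear using 1
  abel

theorem exists_isStarProjection_interpolating {e f p : B} (hp : IsStarProjection p)
    (he : IsSelfAdjoint e) (hf : IsSelfAdjoint f) (he1 : ‖1 - e‖ ≤ 1) (hf1 : ‖f‖ ≤ 1)
    (hfe : f * e = e) (hpe : ‖p * e - e‖ < 1 / 2) (hpf : ‖p * f - p‖ < 1 / 2) :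
    ∃ q : B, IsStarProjection q ∧ (∀ x, e * x = x → q * x = x) ∧
      ∀ y, y * f = f → y * q = q := by
  -- Push `p` under `f`: `P` is the range projection of `f * p`. Then lift `P` above `e`: the result
  -- is the complement of the range projection `Q` of `(1 - e) * (1 - P)`.
  have he' : IsSelfAdjoint (1 - e) := (IsSelfAdjoint.one B).sub he
  obtain ⟨P, hP, hPfp, c, hPc⟩ := exists_rangeProjection_mul hp hf hf1 hpf
  have hPe : ‖(1 - P) * (1 - e) - (1 - P)‖ < 1 / 2 :=
    calc ‖(1 - P) * (1 - e) - (1 - P)‖ = ‖P * (f * (e - p * e)) - f * (e - p * e)‖ := by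
          have hPfpe : P * (f * p * e) = f * p * e := by rw [← mul_assoc, hPfp]
          rw [mul_sub f, hfe, ← mul_assoc f, mul_sub P, hPfpe]
          noncomm_ring
      _ ≤ ‖f * (e - p * e)‖ := norm_isStarProjection_mul_sub_le hP _
      _ ≤ 1 * ‖e - p * e‖ := norm_mul_le_of_le hf1 le_rfl
      _ < 1 / 2 := by rwa [one_mul, norm_sub_rev]
  obtain ⟨Q, hQ, hQv, d, hQd⟩ := exists_rangeProjection_mul hP.one_sub he' he1 hPe
  refine ⟨1 - Q, hQ.one_sub, fun x hex ↦ ?_, fun y hyf ↦ ?_⟩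
  · have hQx : Q * x = 0 := by
      rw [← hQ.isSelfAdjoint.star_eq, hQd, star_mul, star_mul, he'.star_eq, mul_assoc,
        mul_assoc, sub_mul 1 e x, one_mul, hex, sub_self, mul_zero, mul_zero]
    rw [sub_mul, one_mul, hQx, sub_zero]
  · have hey : e * star y = e := by
      have hye : y * e = e := by rw [← hfe, ← mul_assoc, hyf]
      simpa [he.star_eq] using congr(star $hye)
    have hPy : P * star y = P := by
      have hyP : y * P = P := by rw [hPc, mul_assoc f, ← mul_assoc, hyf]
      simpa only [star_mul, hP.isSelfAdjoint.star_eq] using congr(star $hyP)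
    have hQy : Q * (1 - star y) = 1 - star y := by
      have hv : (1 - e) * (1 - P) * (1 - star y) = 1 - star y := by
        simp only [mul_assoc, sub_mul, mul_sub, one_mul, mul_one, hPy, hey]
        abel
      rw [← hv, ← mul_assoc, hQv]
    have hyQ : (1 - y) * Q = 1 - y := by
      simpa [hQ.isSelfAdjoint.star_eq] using congr(star $hQy)
    calc y * (1 - Q) = (1 - Q) - ((1 - y) - (1 - y) * Q) := by noncomm_ring
      _ = 1 - Q := by rw [hyQ, sub_self, sub_zero]

end CStarRing

section Spectrum

variable {𝕜 R : Type*} [Field 𝕜] [Ring R] [Algebra 𝕜 R]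

theorem isUnit_one_sub_smul_of_isIdempotentElem {p : R} (hp : IsIdempotentElem p) {c : 𝕜}
    (hc : c ≠ 1) : IsUnit (1 - c • p) := by
  have hc' : 1 - c ≠ 0 := sub_ne_zero.mpr hc.symm
  refine isUnit_iff_exists.mpr ⟨1 + (c / (1 - c)) • p, ?_, ?_⟩
  all_goals
    simp only [mul_add, sub_mul, add_mul, mul_sub, mul_smul_comm, smul_mul_assoc, hp.eq, one_mul,
      mul_one]
    match_scalars <;> grind

theorem spectrum_add_smul_subset {s p : R} (hp : IsIdempotentElem p) {α : 𝕜}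
    (hsp : s * p = α • p) (β : 𝕜) :
    spectrum 𝕜 (s + β • p) ⊆ insert α (insert (α + β) (spectrum 𝕜 s)) := by
  intro z hz
  by_contra hcon
  simp only [Set.mem_insert_iff, not_or, spectrum.notMem_iff] at hcon
  obtain ⟨hα, hαβ, hs⟩ := hcon
  have hzα : z - α ≠ 0 := sub_ne_zero.mpr hα
  have hβ : β / (z - α) ≠ 1 := by
    rw [Ne, div_eq_one_iff_eq hzα, eq_sub_iff_add_eq']
    exact Ne.symm hαβ
  have hfactor : algebraMap 𝕜 R z - (s + β • p) =
      (algebraMap 𝕜 R z - s) * (1 - (β / (z - α)) • p) := by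
    rw [mul_sub, mul_one, mul_smul_comm, sub_mul, hsp, ← Algebra.smul_def, ← sub_smul, smul_smul,
      div_mul_cancel₀ β hzα, sub_sub]
  exact spectrum.notMem_iff.mpr
    (hfactor ▸ hs.mul (isUnit_one_sub_smul_of_isIdempotentElem hp hβ)) hz

theorem spectrum_algebraMap_subset (α : 𝕜) : spectrum 𝕜 (algebraMap 𝕜 R α) ⊆ {α} := by
  intro z hz
  by_contra hne
  refine spectrum.notMem_iff.mpr ?_ hz
  rw [← map_sub]
  exact (IsUnit.mk0 _ (sub_ne_zero.mpr hne)).map (algebraMap 𝕜 R)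

theorem finite_spectrum_algebraMap_add_smul_sum {q : ℕ → R} (hq : ∀ k, IsIdempotentElem (q k))
    (hanti : ∀ j k, j < k → q j * q k = q k) (α β : 𝕜) (n : ℕ) :
    (spectrum 𝕜 (algebraMap 𝕜 R α + β • ∑ k ∈ Finset.range n, q k)).Finite := by
  induction n with
  | zero => simpa using (Set.finite_singleton α).subset (spectrum_algebraMap_subset α)
  | succ n ih =>
    have hsum : (∑ k ∈ Finset.range n, q k) * q n = n • q n := by
      rw [Finset.sum_mul, Finset.sum_congr rfl fun k hk ↦ hanti k n (Finset.mem_range.mp hk)]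
      simp
    have heigen : (algebraMap 𝕜 R α + β • ∑ k ∈ Finset.range n, q k) * q n =
        (α + β * n) • q n := by
      rw [add_mul, smul_mul_assoc, hsum, ← Algebra.smul_def, ← Nat.cast_smul_eq_nsmul 𝕜,
        smul_smul, add_smul]
    rw [Finset.sum_range_succ, smul_add, ← add_assoc]
    exact ((ih.insert _).insert _).subset (spectrum_add_smul_subset (hq n) heigen β)

end Spectrum

section InterpolatingProjection

variable {B : Type*} [CStarAlgebra B]

theorem continuous_inv_max {r : ℝ} (hr : 0 < r) : Continuous fun u : ℝ ↦ (max u r)⁻¹ :=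
  (continuous_id.max continuous_const).inv₀ fun u ↦ (hr.trans_le (le_max_right u r)).ne'

/-- The projection `q` lies between the spectral projections `χ_{(t, ∞)}(a)` and `χ_{[s, ∞)}(a)` of
`a`. These live in the bidual of `B`, so the two inequalities are expressed by the action of `q` on
the continuous functions of `a` that vanish below `t`, respectively above `s`. -/
structure IsInterpolatingProjection (a q : B) (s t : ℝ) : Prop where
  isStarProjection : IsStarProjection q
  mul_cfc_eq_self : ∀ g : ℝ → ℝ, Continuous g → Set.EqOn g 0 (Set.Iic t) → q * cfc g a = cfc g a
  mul_cfc_eq_zero : ∀ g : ℝ → ℝ, Continuous g → Set.EqOn g 0 (Set.Ici s) → q * cfc g a = 0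

namespace IsInterpolatingProjection

variable {a q q' : B} {s t s' t' : ℝ} {g : ℝ → ℝ}

theorem mono (h : IsInterpolatingProjection a q s t) (hs : s' ≤ s) (ht : t ≤ t') :
    IsInterpolatingProjection a q s' t' where
  isStarProjection := h.isStarProjection
  mul_cfc_eq_self g hg hg0 := h.mul_cfc_eq_self g hg (hg0.mono (Set.Iic_subset_Iic.mpr ht))
  mul_cfc_eq_zero g hg hg0 := h.mul_cfc_eq_zero g hg (hg0.mono (Set.Ici_subset_Ici.mpr hs))

theorem cfc_mul_eq_self (h : IsInterpolatingProjection a q s t) (hg : Continuous g)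
    (hg0 : Set.EqOn g 0 (Set.Iic t)) : cfc g a * q = cfc g a := by
  have hga : star (cfc g a) = cfc g a := cfc_predicate g a
  simpa [h.isStarProjection.isSelfAdjoint.star_eq, hga] using
    congr(star $(h.mul_cfc_eq_self g hg hg0))

theorem mul_cfc_eq_smul (h : IsInterpolatingProjection a q s t) (ha : IsSelfAdjoint a)
    (hg : Continuous g) {M : ℝ} (hgM : ∀ u, s ≤ u → g u = M) : q * cfc g a = M • q := by
  have hzero := h.mul_cfc_eq_zero (fun u ↦ g u - M) (by fun_prop) fun u hu ↦
    sub_eq_zero.mpr (hgM u hu)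
  rw [cfc_sub g (fun _ ↦ M) a, cfc_const M a] at hzero
  rwa [mul_sub, sub_eq_zero, ← Algebra.commutes, ← Algebra.smul_def] at hzero

theorem cfc_mul_eq_smul (h : IsInterpolatingProjection a q s t) (ha : IsSelfAdjoint a)
    (hg : Continuous g) {M : ℝ} (hgM : ∀ u, s ≤ u → g u = M) : cfc g a * q = M • q := by
  have hga : star (cfc g a) = cfc g a := cfc_predicate g a
  simpa [h.isStarProjection.isSelfAdjoint.star_eq, hga] using
    congr(star $(h.mul_cfc_eq_smul ha hg hgM))

theorem mul_eq_right (h : IsInterpolatingProjection a q s t)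
    (h' : IsInterpolatingProjection a q' s' t') (ha : IsSelfAdjoint a) (hts : t < s') :
    q * q' = q' := by
  obtain ⟨φ, hφ0, hφ1, -⟩ := exists_continuous_zero_one_of_isClosed (isClosed_Iic (a := t))
    (isClosed_Ici (a := s')) (Set.Iic_disjoint_Ici.mpr hts.not_ge)
  have hφq' : cfc φ a * q' = q' := by
    rw [h'.cfc_mul_eq_smul ha φ.continuous (M := 1) hφ1, one_smul]
  rw [← hφq', ← mul_assoc, h.mul_cfc_eq_self φ φ.continuous hφ0]

theorem exists_eq_mul_mul (h : IsInterpolatingProjection a q s t) (ha : IsSelfAdjoint a)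
    (hs : 0 < s) : ∃ c, q = a * c * a := by
  have hinv := continuous_inv_max hs
  set k := cfc (fun u : ℝ ↦ (max u s)⁻¹) a
  have hk : star k = k := cfc_predicate (fun u : ℝ ↦ (max u s)⁻¹) a
  have hq : a * k * q = q := by
    have hak : a * k = cfc (fun u : ℝ ↦ u * (max u s)⁻¹) a := by
      rw [cfc_mul (fun u : ℝ ↦ u) _ a (continuousOn_id' _) hinv.continuousOn, cfc_id' ℝ a]
    have hcont : Continuous fun u : ℝ ↦ u * (max u s)⁻¹ := continuous_id.mul hinv
    have hone : ∀ u, s ≤ u → u * (max u s)⁻¹ = 1 := fun u hu ↦ by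
      rw [max_eq_left hu, mul_inv_cancel₀ (hs.trans_le hu).ne']
    rw [hak, h.cfc_mul_eq_smul ha hcont hone, one_smul]
  have hq' : q * k * a = q := by
    simpa [h.isStarProjection.isSelfAdjoint.star_eq, hk, ha.star_eq, mul_assoc] using
      congr(star $hq)
  refine ⟨k * q * q * k, ?_⟩
  calc q = a * k * q * (q * k * a) := by rw [hq, hq', h.isStarProjection.isIdempotentElem]
    _ = a * (k * q * q * k) * a := by simp only [mul_assoc]

variable [PartialOrder B] [StarOrderedRing B]

theorem cfc_le_smul (h : IsInterpolatingProjection a q s t) (hg : Continuous g)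
    (hg0 : Set.EqOn g 0 (Set.Iic t)) {M : ℝ} (hgM : ∀ u, g u ≤ M) (ha : IsSelfAdjoint a) :
    cfc g a ≤ M • q :=
  calc cfc g a = star q * cfc g a * q := by
        rw [h.isStarProjection.isSelfAdjoint.star_eq, h.mul_cfc_eq_self g hg hg0,
          h.cfc_mul_eq_self hg hg0]
    _ ≤ star q * algebraMap ℝ B M * q :=
        star_left_conjugate_le_conjugate (cfc_le_algebraMap g M a fun u _ ↦ hgM u) q
    _ = M • q := by
        rw [h.isStarProjection.isSelfAdjoint.star_eq, ← Algebra.commutes, mul_assoc,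
          h.isStarProjection.isIdempotentElem, Algebra.smul_def]

theorem smul_le_cfc (h : IsInterpolatingProjection a q s t) (ha : IsSelfAdjoint a)
    (hg : Continuous g) {M : ℝ} (hgM : ∀ u, s ≤ u → g u = M) (hg0 : ∀ u, 0 ≤ g u) :
    M • q ≤ cfc g a := by
  have hconj : cfc g a - M • q = star (1 - q) * cfc g a * (1 - q) := by
    rw [h.isStarProjection.one_sub.isSelfAdjoint.star_eq, sub_mul, one_mul,
      h.mul_cfc_eq_smul ha hg hgM, sub_mul, mul_one_sub, mul_one_sub,
      h.cfc_mul_eq_smul ha hg hgM, smul_mul_assoc, h.isStarProjection.isIdempotentElem, sub_self,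
      sub_zero]
  rw [← sub_nonneg, hconj]
  exact star_left_conjugate_nonneg (cfc_nonneg fun u _ ↦ hg0 u) (1 - q)

theorem norm_mul_sub_le (h : IsInterpolatingProjection a q s t) (ha : 0 ≤ a) (ht : 0 ≤ t) :
    ‖q * a - a‖ ≤ t := by
  have hsa : IsSelfAdjoint a := .of_nonneg ha
  have hq : q * cfc (fun u : ℝ ↦ max (u - t) 0) a = cfc (fun u : ℝ ↦ max (u - t) 0) a :=
    h.mul_cfc_eq_self _ (by fun_prop) fun u hu ↦ max_eq_right (sub_nonpos.mpr hu)
  have hmin : a - cfc (fun u : ℝ ↦ max (u - t) 0) a = cfc (fun u : ℝ ↦ min u t) a := by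
    conv_lhs => enter [1]; rw [← cfc_id ℝ a]
    rw [← cfc_sub id (fun u : ℝ ↦ max (u - t) 0) a]
    exact cfc_congr fun u _ ↦ by grind
  calc ‖q * a - a‖
      = ‖q * cfc (fun u : ℝ ↦ min u t) a - cfc (fun u : ℝ ↦ min u t) a‖ := by
        rw [← hmin, mul_sub, hq, sub_sub_sub_cancel_right]
    _ ≤ ‖cfc (fun u : ℝ ↦ min u t) a‖ := norm_isStarProjection_mul_sub_le h.isStarProjection _
    _ ≤ t := norm_cfc_le ht fun u hu ↦ by
        rw [Real.norm_of_nonneg (le_min (spectrum_nonneg_of_nonneg ha hu) ht)]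
        exact min_le_right u t

end IsInterpolatingProjection

end InterpolatingProjection

section Conditions

variable {B : Type*} [CStarAlgebra B]

/-- Self-adjoint elements of `A` are norm limits of self-adjoint elements with finite spectrum. -/
def HasFiniteSpectrumApproximation (A : Set B) : Prop :=
  ∀ a ∈ A, IsSelfAdjoint a → ∀ ε : ℝ, 0 < ε →
    ∃ b : B, IsSelfAdjoint b ∧ (spectrum ℂ b).Finite ∧ ‖a - b‖ ≤ ε

/-- Self-adjoint elements of `A` are norm limits of invertible self-adjoint elements. -/
def HasInvertibleApproximation (A : Set B) : Prop :=
  ∀ a ∈ A, IsSelfAdjoint a → ∀ ε : ℝ, 0 < ε →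
    ∃ b : B, IsSelfAdjoint b ∧ IsUnit b ∧ ‖a - b‖ ≤ ε

/-- Orthogonal positive elements of `A` can be approximately separated by a projection. -/
def HasProjectionSeparation [PartialOrder B] (A : Set B) : Prop :=
  ∀ x ∈ A, ∀ y ∈ A, 0 ≤ x → 0 ≤ y → x * y = 0 → ∀ ε : ℝ, 0 < ε →
    ∃ p : B, IsProjection p ∧ ‖p * x - x‖ ≤ ε ∧ ‖(1 - p) * y - y‖ ≤ ε

end Conditions

section Separation

variable {B : Type*} [CStarAlgebra B] {a : B}

theorem one_sub_cfc (ha : IsSelfAdjoint a) {g : ℝ → ℝ} (hg : Continuous g) :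
    1 - cfc g a = cfc (fun u ↦ 1 - g u) a := by
  rw [cfc_sub (fun _ ↦ (1 : ℝ)) g a, cfc_const_one ℝ a]

theorem norm_one_sub_cfc_le_one (ha : IsSelfAdjoint a) {g : ℝ → ℝ} (hg : Continuous g)
    (hg01 : ∀ u, g u ∈ Set.Icc 0 1) : ‖1 - cfc g a‖ ≤ 1 := by
  rw [one_sub_cfc ha hg]
  refine norm_cfc_le zero_le_one fun u _ ↦ ?_
  rw [Real.norm_of_nonneg (sub_nonneg.mpr (hg01 u).2)]
  exact sub_le_self 1 (hg01 u).1

theorem isInterpolatingProjection_of_continuous {q : B} {s t : ℝ} {φ ψ : ℝ → ℝ}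
    (hφ : Continuous φ) (hψ : Continuous ψ) (hφ1 : ∀ u, t ≤ u → φ u = 1)
    (hψ0 : ∀ u, u ≤ s → ψ u = 0) (hq : IsStarProjection q)
    (hqφ : ∀ x, cfc φ a * x = x → q * x = x)
    (hqψ : ∀ y, y * cfc ψ a = cfc ψ a → y * q = q) : IsInterpolatingProjection a q s t where
  isStarProjection := hq
  mul_cfc_eq_self g hg hg0 := hqφ _ <| by
    rw [← cfc_mul φ g a]
    refine cfc_congr fun u _ ↦ ?_
    rcases le_total u t with hu | hu
    · simp [hg0 hu]
    · simp [hφ1 u hu]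
  mul_cfc_eq_zero g hg hg0 := by
    have hgψ : cfc g a * cfc ψ a = 0 := by
      rw [← cfc_mul g ψ a, ← cfc_zero ℝ a]
      refine cfc_congr fun u _ ↦ ?_
      rcases le_total u s with hu | hu
      · simp [hψ0 u hu]
      · simp [hg0 hu]
    have hgq : cfc g a * q = 0 := by
      simpa [sub_mul] using hqψ (1 - cfc g a) (by rw [sub_mul, hgψ, one_mul, sub_zero])
    have hga : star (cfc g a) = cfc g a := cfc_predicate g a
    simpa [hq.isSelfAdjoint.star_eq, hga] using congr(star $hgq)

variable [PartialOrder B] [StarOrderedRing B]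

theorem HasProjectionSeparation.exists_isInterpolatingProjection {S : Type*} [SetLike S B]
    [SubringClass S B] [SMulMemClass S ℝ B] [StarMemClass S B] {A : S}
    (h : HasProjectionSeparation (A : Set B)) (hA : IsClosed (A : Set B)) (ha : a ∈ A)
    (hsa : IsSelfAdjoint a) {s t : ℝ} (hst : s < t) :
    ∃ q : B, IsInterpolatingProjection a q s t := by
  obtain ⟨m, hsm, hmt⟩ := exists_between hst
  obtain ⟨φ, hφ0, hφ1, hφ⟩ := exists_continuous_zero_one_of_isClosed (isClosed_Iic (a := m))
    (isClosed_Ici (a := t)) (Set.Iic_disjoint_Ici.mpr hmt.not_ge)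
  obtain ⟨ψ, hψ0, hψ1, hψ⟩ := exists_continuous_zero_one_of_isClosed (isClosed_Iic (a := s))
    (isClosed_Ici (a := m)) (Set.Iic_disjoint_Ici.mpr hsm.not_ge)
  set e := cfc φ a
  set f := cfc ψ a
  have hfe : f * e = e := by
    rw [← cfc_mul ψ φ a]
    refine cfc_congr fun u _ ↦ ?_
    rcases le_total u m with hu | hu
    · simp [hφ0 hu]
    · simp [hψ1 hu]
  have hef : e * (1 - f) = 0 := by
    rw [mul_sub, mul_one, (cfc_commute_cfc φ ψ a).eq, hfe, sub_self]
  have hf : 0 ≤ 1 - f := by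
    rw [one_sub_cfc hsa ψ.continuous]
    exact cfc_nonneg fun u _ ↦ sub_nonneg.mpr (hψ u).2
  have hf1 : ‖f‖ ≤ 1 := norm_cfc_le zero_le_one fun u _ ↦ by
    rw [Real.norm_of_nonneg (hψ u).1]
    exact (hψ u).2
  obtain ⟨p, hp, hpe, hpf⟩ := h e (cfc_mem φ ha) (1 - f) (sub_mem (one_mem A) (cfc_mem ψ ha))
    (cfc_nonneg fun u _ ↦ (hφ u).1) hf hef (1 / 4) (by norm_num)
  have hpf' : (1 - p) * (1 - f) - (1 - f) = p * f - p := by noncomm_ring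
  rw [hpf'] at hpf
  obtain ⟨q, hq, hqe, hqf⟩ := exists_isStarProjection_interpolating
    (isProjection_iff_isStarProjection.mp hp) (cfc_predicate φ a) (cfc_predicate ψ a)
    (norm_one_sub_cfc_le_one hsa φ.continuous hφ) hf1 hfe (by linarith) (by linarith)
  exact ⟨q, isInterpolatingProjection_of_continuous φ.continuous ψ.continuous hφ1 hψ0 hq hqe hqf⟩

end Separation

section HereditarySubalgebra

theorem mul_eq_zero_of_mem_herSub {B : Type*} [NonUnitalNormedRing B] {S : Set B} {x y p : B}
    (hxy : x * y = 0) (hp : p ∈ herSub S x) : p * y = 0 :=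
  closure_minimal (t := {z | z * y = 0})
    (by rintro _ ⟨b, -, rfl⟩; rw [Set.mem_ofPred_eq, mul_assoc, hxy, mul_zero])
    (isClosed_eq (by fun_prop) continuous_const) hp

theorem hasApproxUnitOfProjections_herSub {B : Type*} [NormedRing B] [StarRing B] [CStarRing B]
    [PartialOrder B] {S : Set B} {a : B}
    (h : ∀ ε : ℝ, 0 < ε → ∃ q ∈ herSub S a, IsStarProjection q ∧ ‖q * a - a‖ ≤ ε) :
    HasApproxUnitOfProjections (herSub S a) := by
  intro x hx _ ε hε
  obtain ⟨_, ⟨b, -, rfl⟩, hxb⟩ := Metric.mem_closure_iff.mp hx (ε / 2) (half_pos hε)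
  rw [dist_eq_norm] at hxb
  obtain ⟨δ, hδ, hδb⟩ := exists_pos_mul_lt (half_pos hε) ‖b * a‖
  obtain ⟨q, hqmem, hq, hqa⟩ := h δ hδ
  refine ⟨q, hqmem, isProjection_iff_isStarProjection.mpr hq, ?_⟩
  set y := x - a * b * a
  calc ‖q * x - x‖ = ‖(q * y - y) + (q * a - a) * (b * a)‖ := by
        congr 1
        simp only [y]
        noncomm_ring
    _ ≤ ‖y‖ + ‖q * a - a‖ * ‖b * a‖ :=
        norm_add_le_of_le (norm_isStarProjection_mul_sub_le hq y) (norm_mul_le _ _)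
    _ ≤ ‖y‖ + ‖b * a‖ * δ := by
        rw [mul_comm ‖b * a‖]
        gcongr
    _ < ε := by linarith

variable {B : Type*} [CStarAlgebra B] [PartialOrder B] [StarOrderedRing B]

theorem mem_herSub_self {x : B} (hx : 0 ≤ x) : x ∈ herSub Set.univ x := by
  refine Metric.mem_closure_iff.mpr fun ε hε ↦ ?_
  obtain ⟨δ, hδ, hδε⟩ := exists_between hε
  have hcont := continuous_inv_max hδ
  refine ⟨_, ⟨cfc (fun u : ℝ ↦ (max u δ)⁻¹) x, Set.mem_univ _, rfl⟩, ?_⟩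
  have hdiff : x - x * cfc (fun u : ℝ ↦ (max u δ)⁻¹) x * x =
      cfc (fun u : ℝ ↦ u - u * (max u δ)⁻¹ * u) x := by
    rw [cfc_sub (fun u : ℝ ↦ u) _ x (by fun_prop) (by fun_prop),
      cfc_mul _ (fun u : ℝ ↦ u) x (by fun_prop),
      cfc_mul (fun u : ℝ ↦ u) _ x (by fun_prop) hcont.continuousOn, cfc_id' ℝ x]
  rw [dist_eq_norm, hdiff]
  refine (norm_cfc_le hδ.le fun u hu ↦ ?_).trans_lt hδε
  have hu0 : 0 ≤ u := spectrum_nonneg_of_nonneg hx hu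
  rcases le_total u δ with huδ | huδ
  · rw [max_eq_right huδ]
    have : u * δ⁻¹ ≤ 1 := by field_simp; exact huδ
    rw [Real.norm_of_nonneg (by nlinarith)]
    nlinarith [mul_nonneg (mul_nonneg hu0 (inv_nonneg.mpr hδ.le)) hu0]
  · rw [max_eq_left huδ, mul_inv_cancel₀ (hδ.trans_le huδ).ne', one_mul, sub_self, norm_zero]
    exact hδ.le

theorem InclusionRealRankZero.hasProjectionSeparation {A : Set B}
    (h : InclusionRealRankZero A Set.univ) : HasProjectionSeparation A := by
  intro x hx y _ hx0 _ hxy ε hε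
  rcases eq_or_ne x 0 with rfl | hxne
  · exact ⟨0, isProjection_iff_isStarProjection.mpr (.zero B), by simpa using hε.le,
      by simpa using hε.le⟩
  · obtain ⟨p, hpmem, hp, hpx⟩ := h x hx hx0 hxne x (mem_herSub_self hx0) hx0 ε hε
    refine ⟨p, hp, hpx.le, ?_⟩
    rw [sub_mul, one_mul, mul_eq_zero_of_mem_herSub hxy hpmem, sub_zero, sub_self, norm_zero]
    exact hε.le

theorem HasProjectionSeparation.inclusionRealRankZero {S : Type*} [SetLike S B]
    [SubringClass S B] [SMulMemClass S ℝ B] [StarMemClass S B] {A : S}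
    (h : HasProjectionSeparation (A : Set B)) (hA : IsClosed (A : Set B)) :
    InclusionRealRankZero (A : Set B) Set.univ := by
  intro a ha ha0 _
  refine hasApproxUnitOfProjections_herSub fun ε hε ↦ ?_
  have hsa : IsSelfAdjoint a := .of_nonneg ha0
  obtain ⟨q, hq⟩ := h.exists_isInterpolatingProjection hA ha hsa (half_lt_self hε)
  obtain ⟨c, hc⟩ := hq.exists_eq_mul_mul hsa (half_pos hε)
  exact ⟨q, subset_closure ⟨c, Set.mem_univ c, hc⟩, hq.isStarProjection,
    hq.norm_mul_sub_le ha0 hε.le⟩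

end HereditarySubalgebra

section FiniteSpectrum

variable {B : Type*} [CStarAlgebra B] {a : B}

theorem finite_complex_spectrum_of_finite_real_spectrum (ha : IsSelfAdjoint a)
    (hfin : (spectrum ℝ a).Finite) : (spectrum ℂ a).Finite := by
  rw [← ha.spectrumRestricts.algebraMap_image]
  exact hfin.image _

variable [PartialOrder B] [StarOrderedRing B]

theorem norm_le_of_neg_algebraMap_le_of_le_algebraMap (ha : IsSelfAdjoint a) {r : ℝ} (hr : 0 ≤ r)
    (hle : -algebraMap ℝ B r ≤ a) (hge : a ≤ algebraMap ℝ B r) : ‖a‖ ≤ r := by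
  rw [← map_neg, algebraMap_le_iff_le_spectrum] at hle
  rw [le_algebraMap_iff_spectrum_le] at hge
  rw [← cfc_id ℝ a]
  exact norm_cfc_le hr fun u hu ↦ abs_le.mpr ⟨hle u hu, hge u hu⟩

namespace IsInterpolatingProjection

variable {q : B} {s t r r' : ℝ}

theorem cfc_min_sub_cfc_min_le_smul (h : IsInterpolatingProjection a q s t)
    (ha : IsSelfAdjoint a) (htr : t ≤ r) (hr : r ≤ r') :
    cfc (min · r') a - cfc (min · r) a ≤ (r' - r) • q := by
  rw [← cfc_sub (min · r') (min · r) a]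
  refine h.cfc_le_smul (by fun_prop) (fun u hu ↦ ?_) (fun u ↦ by grind) ha
  have hut : u ≤ t := hu
  simp [hut.trans htr, hut.trans (htr.trans hr)]

theorem smul_le_cfc_min_sub_cfc_min (h : IsInterpolatingProjection a q s t)
    (ha : IsSelfAdjoint a) (hr : r ≤ r') (hrs : r' ≤ s) :
    (r' - r) • q ≤ cfc (min · r') a - cfc (min · r) a := by
  rw [← cfc_sub (min · r') (min · r) a]
  exact h.smul_le_cfc ha (by fun_prop) (fun u hu ↦ by grind) fun u ↦ by grind

end IsInterpolatingProjection

section Staircase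

variable {q : ℕ → B} {l ε : ℝ} {n : ℕ}

theorem le_algebraMap_add_smul_sum (ha : IsSelfAdjoint a) (hε : 0 < ε)
    (hq : ∀ k : ℕ, IsInterpolatingProjection a (q k) (l + ε * k) (l + ε * (k + 1)))
    (hn : a ≤ algebraMap ℝ B (l + ε * n)) :
    a ≤ algebraMap ℝ B (l + ε) + ε • ∑ k ∈ Finset.range n, q k := by
  let T : ℕ → B := fun k ↦ cfc (fun u ↦ min u (l + ε * (k + 1))) a
  have hstep : ∀ k, T (k + 1) - T k ≤ ε • q k := fun k ↦ by
    convert (hq k).cfc_min_sub_cfc_min_le_smul ha le_rfl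
      (r' := l + ε * (k + 1 + 1)) (by nlinarith) using 2
    · simp [T]
    · ring
  have htop : T n = a := by
    conv_rhs => rw [← cfc_id ℝ a]
    rw [le_algebraMap_iff_spectrum_le] at hn
    exact cfc_congr fun u hu ↦ min_eq_left ((hn u hu).trans (by nlinarith))
  have hbot : T 0 ≤ algebraMap ℝ B (l + ε) :=
    cfc_le_algebraMap _ _ a fun u _ ↦ (min_le_right u _).trans (by simp)
  calc a = T 0 + ∑ k ∈ Finset.range n, (T (k + 1) - T k) := by
        rw [Finset.sum_range_sub, htop, add_sub_cancel]
    _ ≤ algebraMap ℝ B (l + ε) + ε • ∑ k ∈ Finset.range n, q k := by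
        rw [Finset.smul_sum]
        exact add_le_add hbot (Finset.sum_le_sum fun k _ ↦ hstep k)

theorem algebraMap_add_smul_sum_le (ha : IsSelfAdjoint a) (hε : 0 < ε)
    (hq : ∀ k : ℕ, IsInterpolatingProjection a (q k) (l + ε * k) (l + ε * (k + 1)))
    (hl : algebraMap ℝ B l ≤ a) :
    algebraMap ℝ B (l - ε) + ε • ∑ k ∈ Finset.range n, q k ≤ a := by
  let T : ℕ → B := fun k ↦ cfc (fun u ↦ min u (l + ε * (k - 1))) a
  have hstep : ∀ k, ε • q k ≤ T (k + 1) - T k := fun k ↦ by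
    convert (hq k).smul_le_cfc_min_sub_cfc_min ha
      (r := l + ε * (k - 1)) (by nlinarith) le_rfl using 2
    · ring
    · simp [T]
  have htop : T n ≤ a := by
    conv_rhs => rw [← cfc_id ℝ a]
    exact cfc_mono fun u _ ↦ min_le_left u _
  have hbot : T 0 = algebraMap ℝ B (l - ε) := by
    rw [algebraMap_le_iff_le_spectrum] at hl
    rw [← cfc_const (l - ε) a]
    refine cfc_congr fun u hu ↦ ?_
    rw [Nat.cast_zero, zero_sub, mul_neg_one, ← sub_eq_add_neg]
    exact min_eq_right ((sub_le_self l hε.le).trans (hl u hu))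
  calc algebraMap ℝ B (l - ε) + ε • ∑ k ∈ Finset.range n, q k
      ≤ T 0 + ∑ k ∈ Finset.range n, (T (k + 1) - T k) := by
        rw [hbot, Finset.smul_sum]
        gcongr with k
        exact hstep k
    _ = T n := by rw [Finset.sum_range_sub, add_sub_cancel]
    _ ≤ a := htop

end Staircase

theorem HasProjectionSeparation.hasFiniteSpectrumApproximation {S : Type*} [SetLike S B]
    [SubringClass S B] [SMulMemClass S ℝ B] [StarMemClass S B] {A : S}
    (h : HasProjectionSeparation (A : Set B)) (hA : IsClosed (A : Set B)) :
    HasFiniteSpectrumApproximation (A : Set B) := by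
  intro a ha hsa ε hε
  set l := -‖a‖
  have hl : algebraMap ℝ B l ≤ a := by
    rw [map_neg]
    exact hsa.neg_algebraMap_norm_le_self
  obtain ⟨n, hn⟩ : ∃ n : ℕ, a ≤ algebraMap ℝ B (l + ε * n) := by
    obtain ⟨n, hn⟩ := exists_nat_ge ((‖a‖ - l) / ε)
    refine ⟨n, hsa.le_algebraMap_norm_self.trans (algebraMap_mono B ?_)⟩
    rw [div_le_iff₀' hε] at hn
    linarith
  -- The half-step gaps between consecutive levels make the sequence `q` decreasing.
  choose q hq using fun k : ℕ ↦ h.exists_isInterpolatingProjection hA ha hsa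
    (show l + ε * k < l + ε * (k + 1 / 2) by linarith)
  have hq' : ∀ k : ℕ, IsInterpolatingProjection a (q k) (l + ε * k) (l + ε * (k + 1)) :=
    fun k ↦ (hq k).mono le_rfl (by nlinarith)
  have hanti : ∀ j k, j < k → q j * q k = q k := fun j k hjk ↦
    (hq j).mul_eq_right (hq k) hsa (by
      have : (j : ℝ) + 1 ≤ k := mod_cast hjk
      nlinarith)
  set b := algebraMap ℝ B l + ε • ∑ k ∈ Finset.range n, q k
  have hb : IsSelfAdjoint b := (IsSelfAdjoint.algebraMap B (.all l)).add <|
    (IsSelfAdjoint.all ε).smul <|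
      isSelfAdjoint_sum _ fun k _ ↦ (hq k).isStarProjection.isSelfAdjoint
  refine ⟨b, hb, finite_complex_spectrum_of_finite_real_spectrum hb <|
    finite_spectrum_algebraMap_add_smul_sum (fun k ↦ (hq k).isStarProjection.isIdempotentElem)
      hanti l ε n, ?_⟩
  refine norm_le_of_neg_algebraMap_le_of_le_algebraMap (hsa.sub hb) hε.le ?_ ?_
  · have := algebraMap_add_smul_sum_le hsa hε hq' hl (n := n)
    rw [map_sub, sub_add_eq_add_sub, sub_le_iff_le_add] at this
    rwa [neg_le_sub_iff_le_add]
  · have := le_algebraMap_add_smul_sum hsa hε hq' hn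
    rw [map_add, add_right_comm] at this
    rwa [sub_le_iff_le_add']

end FiniteSpectrum

section InvertibleApproximation

variable {B : Type*} [CStarAlgebra B]

theorem exists_isUnit_norm_sub_le_of_finite_spectrum {b : B} (hb : IsSelfAdjoint b)
    (hfin : (spectrum ℂ b).Finite) {ε : ℝ} (hε : 0 < ε) :
    ∃ c : B, IsSelfAdjoint c ∧ IsUnit c ∧ ‖b - c‖ ≤ ε := by
  have hfinR : (spectrum ℝ b).Finite := by
    rw [← spectrum.preimage_algebraMap ℂ]
    exact hfin.preimage (algebraMap ℝ ℂ).injective.injOn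
  obtain ⟨t, ht, htb⟩ := ((Set.Ioo_infinite hε).sdiff hfinR).nonempty
  refine ⟨b - algebraMap ℝ B t, hb.sub (.algebraMap B (.all t)), ?_, ?_⟩
  · simpa only [neg_sub] using (spectrum.notMem_iff.mp htb).neg
  · rw [sub_sub_cancel, Algebra.algebraMap_eq_smul_one, norm_smul, Real.norm_of_nonneg ht.1.le]
    exact (mul_le_of_le_one_right ht.1.le (IsStarProjection.norm_le _ (.one B))).trans ht.2.le

theorem HasFiniteSpectrumApproximation.hasInvertibleApproximation {A : Set B}
    (h : HasFiniteSpectrumApproximation A) : HasInvertibleApproximation A := by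
  intro a ha hsa ε hε
  obtain ⟨b, hb, hfin, hab⟩ := h a ha hsa (ε / 2) (half_pos hε)
  obtain ⟨c, hc, hu, hbc⟩ := exists_isUnit_norm_sub_le_of_finite_spectrum hb hfin (half_pos hε)
  exact ⟨c, hc, hu, (norm_sub_le_norm_sub_add_norm_sub a b c).trans (by linarith)⟩

theorem continuousOn_posPart : ContinuousOn (fun b : B ↦ b⁺) {b | IsSelfAdjoint b} := by
  simp only [CFC.posPart_def]
  exact ContinuousOn.cfcₙ_of_mem_nhdsSet (s := Set.univ) _ Filter.univ_mem continuousOn_id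
    (fun _ h ↦ h) (by simp only [posPart_def]; fun_prop) (by simp)

theorem continuousOn_negPart : ContinuousOn (fun b : B ↦ b⁻) {b | IsSelfAdjoint b} :=
  (continuousOn_posPart.sub continuousOn_id).congr fun b hb ↦
    eq_sub_iff_add_eq'.mpr (sub_eq_iff_eq_add.mp (CFC.posPart_sub_negPart b hb)).symm

theorem exists_isStarProjection_mul_posPart_eq {b : B} (hu : IsUnit b) :
    ∃ p : B, IsStarProjection p ∧ p * b⁺ = b⁺ ∧ p * b⁻ = 0 := by
  have h0 : ∀ t ∈ spectrum ℝ b, t ≠ 0 := fun t ht ht0 ↦ spectrum.zero_notMem ℝ hu (ht0 ▸ ht)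
  have hχ : ContinuousOn (fun t : ℝ ↦ t⁺ * t⁻¹) (spectrum ℝ b) := by
    simp only [posPart_def]
    exact (by fun_prop : Continuous fun t : ℝ ↦ t ⊔ 0).continuousOn.mul (continuousOn_inv₀.mono h0)
  have hpos : b⁺ = cfc (fun t : ℝ ↦ t⁺) b := by rw [CFC.posPart_def, cfcₙ_eq_cfc ..]
  have hneg : b⁻ = cfc (fun t : ℝ ↦ t⁻) b := by rw [CFC.negPart_def, cfcₙ_eq_cfc ..]
  refine ⟨cfc (fun t : ℝ ↦ t⁺ * t⁻¹) b, ⟨?_, cfc_predicate _ _⟩, ?_, ?_⟩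
  · rw [IsIdempotentElem, ← cfc_mul _ _ b hχ hχ]
    refine cfc_congr fun t ht ↦ ?_
    have := h0 t ht
    simp only [posPart_def]
    grind
  · rw [hpos, ← cfc_mul _ _ b hχ]
    refine cfc_congr fun t ht ↦ ?_
    have := h0 t ht
    simp only [posPart_def]
    grind
  · rw [hneg, ← cfc_mul _ _ b hχ, ← cfc_zero ℝ b]
    refine cfc_congr fun t ht ↦ ?_
    have := h0 t ht
    simp only [posPart_def, negPart_def, Pi.zero_apply]
    grind

variable [PartialOrder B] [StarOrderedRing B]

theorem HasInvertibleApproximation.hasProjectionSeparation {S : Type*} [SetLike S B]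
    [AddSubgroupClass S B] {A : S} (h : HasInvertibleApproximation (A : Set B)) :
    HasProjectionSeparation (A : Set B) := by
  intro x hx y hy hx0 hy0 hxy ε hε
  have hsa : IsSelfAdjoint (x - y) := (IsSelfAdjoint.of_nonneg hx0).sub (.of_nonneg hy0)
  obtain ⟨hposx, hnegy⟩ := CFC.posPart_negPart_unique rfl hxy hx0 hy0
  obtain ⟨δ₁, hδ₁, hpos⟩ := Metric.continuousOn_iff.mp continuousOn_posPart (x - y) hsa ε hε
  obtain ⟨δ₂, hδ₂, hneg⟩ := Metric.continuousOn_iff.mp continuousOn_negPart (x - y) hsa ε hε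
  obtain ⟨δ, hδ, hδlt⟩ := exists_between (lt_min hδ₁ hδ₂)
  obtain ⟨b, hb, hu, hab⟩ := h (x - y) (sub_mem hx hy) hsa δ hδ
  rw [← dist_eq_norm, dist_comm] at hab
  have hbx := hpos b hb (hab.trans_lt (hδlt.trans_le (min_le_left _ _)))
  have hby := hneg b hb (hab.trans_lt (hδlt.trans_le (min_le_right _ _)))
  rw [dist_comm, dist_eq_norm, hposx] at hbx
  rw [dist_comm, dist_eq_norm, hnegy] at hby
  obtain ⟨p, hp, hppos, hpneg⟩ := exists_isStarProjection_mul_posPart_eq hu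
  refine ⟨p, isProjection_iff_isStarProjection.mpr hp, ?_, ?_⟩
  · calc ‖p * x - x‖ = ‖p * (x - b⁺) - (x - b⁺)‖ := by
          rw [mul_sub, hppos, sub_sub_sub_cancel_right]
      _ ≤ ‖x - b⁺‖ := norm_isStarProjection_mul_sub_le hp _
      _ ≤ ε := hbx.le
  · calc ‖(1 - p) * y - y‖ = ‖p * (y - b⁻)‖ := by
          rw [mul_sub, hpneg, sub_zero, sub_mul, one_mul, sub_sub_cancel_left, norm_neg]
      _ ≤ ‖y - b⁻‖ := norm_isStarProjection_mul_le hp _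
      _ ≤ ε := hby.le

end InvertibleApproximation

theorem stmt0_general {B S : Type*} [CStarAlgebra B] [PartialOrder B] [StarOrderedRing B]
    [SetLike S B] [SubringClass S B] [SMulMemClass S ℝ B] [StarMemClass S B] (A : S)
    (hA : IsClosed (A : Set B)) :
    List.TFAE
      [InclusionRealRankZero (A : Set B) Set.univ, HasFiniteSpectrumApproximation (A : Set B),
       HasInvertibleApproximation (A : Set B), HasProjectionSeparation (A : Set B)] := by
  tfae_have 1 → 4 := InclusionRealRankZero.hasProjectionSeparation
  tfae_have 4 → 1 := fun h ↦ h.inclusionRealRankZero hA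
  tfae_have 4 → 2 := fun h ↦ h.hasFiniteSpectrumApproximation hA
  tfae_have 2 → 3 := HasFiniteSpectrumApproximation.hasInvertibleApproximation
  tfae_have 3 → 4 := HasInvertibleApproximation.hasProjectionSeparation
  tfae_finish

theorem stmt0 {B : Type*} [CStarAlgebra B] [PartialOrder B] [StarOrderedRing B]
    (A : StarSubalgebra ℂ B) (hA : IsClosed (A : Set B)) :
    List.TFAE
      [InclusionRealRankZero (A : Set B) (Set.univ : Set B),
       ∀ a ∈ A, IsSelfAdjoint a → ∀ ε : ℝ, 0 < ε →
         ∃ b : B, IsSelfAdjoint b ∧ (spectrum ℂ b).Finite ∧ ‖a - b‖ ≤ ε,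
       ∀ a ∈ A, IsSelfAdjoint a → ∀ ε : ℝ, 0 < ε →
         ∃ b : B, IsSelfAdjoint b ∧ IsUnit b ∧ ‖a - b‖ ≤ ε,
       ∀ x ∈ A, ∀ y ∈ A, 0 ≤ x → 0 ≤ y → x * y = 0 → ∀ ε : ℝ, 0 < ε →
         ∃ p : B, IsProjection p ∧ ‖p * x - x‖ ≤ ε ∧ ‖(1 - p) * y - y‖ ≤ ε] :=
  have := SMulMemClass.ofIsScalarTower (StarSubalgebra ℂ B) ℝ ℂ B
  stmt0_general A hA
end

section
/- Let A ⊆ B be an inclusion of C*-algebras (A a closed *-subalgebra of B). Suppose there exist a C*-algebra C with real rank zero, *-homomorphisms ψ : A → C and φ : C → B, and a net (u_λ) of unitary elements of the multiplier algebra M(B) of B such that u_λ · φ(ψ(a)) · u_λ* → a in norm for every a ∈ A. Then the inclusion A ⊆ B has real rank zero. -/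
open Filter Topology MultiplierAlgebra

/-- A C*-algebra `C` has real rank zero: every self-adjoint element of `C` is a norm limit
of self-adjoint elements of `C` having finite spectrum. -/
def AlgRealRankZero (C : Type*) [NonUnitalCStarAlgebra C] : Prop :=
  ∀ a : C, IsSelfAdjoint a → ∀ ε : ℝ, 0 < ε →
    ∃ b : C, IsSelfAdjoint b ∧ (spectrum ℂ (b : Unitization ℂ C)).Finite ∧ ‖a - b‖ ≤ ε

/-!
Let `a` be self-adjoint and let `b` be self-adjoint with finite spectrum and very close to `a`. The
spectral projection of `b` for `{t | r < |t|}` is `b * k * b` with `‖k‖ ≤ r⁻²`, so this bound does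
not depend on `b`. Hence `a * k * a` is almost a projection, and functional calculus turns it into a
projection `a * d * a` which acts on `a` almost as a unit. So it suffices that the positive elements
of `A` are limits of self-adjoint elements of `B` with finite spectrum. These come from `C`: finite
spectrum survives `φ` and conjugation by a unitary multiplier, which maps `B` to itself because `B`
is an ideal of its multiplier algebra.
-/

section SpectralCutoff

/-- The function `t ↦ t⁻²` on `{t | r < |t|}`, extended by zero. It is used to factor the spectral
projection of `h` for this set as `h * k * h`, which stays in the hereditary subalgebra of `h`. -/
noncomputable def invSqCutoff (r t : ℝ) : ℝ := if r < |t| then (t ^ 2)⁻¹ else 0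

variable {r t : ℝ}

lemma invSqCutoff_zero (hr : 0 ≤ r) : invSqCutoff r 0 = 0 := by
  simp [invSqCutoff, hr.not_gt]

lemma mul_invSqCutoff_mul (hr : 0 ≤ r) (t : ℝ) :
    t * invSqCutoff r t * t = if r < |t| then 1 else 0 := by
  unfold invSqCutoff
  split_ifs with ht
  · have : t ≠ 0 := abs_pos.mp (hr.trans_lt ht)
    field_simp
  · simp

lemma norm_invSqCutoff_le (hr : 0 < r) (t : ℝ) : ‖invSqCutoff r t‖ ≤ (r ^ 2)⁻¹ := by
  unfold invSqCutoff
  split_ifs with ht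
  · rw [Real.norm_of_nonneg (by positivity), ← sq_abs t]
    gcongr
  · rw [norm_zero]
    positivity

lemma continuousAt_invSqCutoff (hr : 0 ≤ r) (ht : |t| ≠ r) : ContinuousAt (invSqCutoff r) t := by
  rcases ht.lt_or_gt with hlt | hgt
  · refine (continuousAt_const (y := (0 : ℝ))).congr ?_
    filter_upwards [continuous_abs.continuousAt.eventually_lt_const hlt] with s hs
    exact (if_neg hs.not_gt).symm
  · have h0 : t ^ 2 ≠ 0 := pow_ne_zero 2 (abs_pos.mp (hr.trans_lt hgt))
    have hinv : ContinuousAt (fun s : ℝ ↦ (s ^ 2)⁻¹) t := by fun_prop (disch := assumption)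
    refine hinv.congr ?_
    filter_upwards [continuous_abs.continuousAt.eventually_const_lt hgt] with s hs
    exact (if_pos hs).symm

lemma abs_mul_invSqCutoff_mul_mul_sub_le (hr : 0 ≤ r) (t : ℝ) :
    |t * invSqCutoff r t * t * t - t| ≤ r := by
  rw [mul_invSqCutoff_mul hr]
  split_ifs with ht
  · simpa using hr
  · simpa using ht

lemma abs_mul_invSqCutoff_mul_sub_le (t : ℝ) :
    |t * invSqCutoff (1 / 2) t * t - t| ≤ 2 * |t * t - t| := by
  rw [mul_invSqCutoff_mul (by norm_num), show t * t - t = t * (t - 1) by ring, abs_mul]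
  split_ifs with ht
  · rw [abs_sub_comm]
    nlinarith [abs_nonneg (t - 1)]
  · have : 1 / 2 ≤ |t - 1| := by
      rw [abs_sub_comm]
      linarith [le_abs_self (1 - t), le_abs_self t]
    rw [zero_sub, abs_neg]
    nlinarith [abs_nonneg t]

variable {B : Type*} [NonUnitalCStarAlgebra B] {h : B}

lemma mul_cfcₙ_invSqCutoff_mul (hh : IsSelfAdjoint h) (hr : 0 ≤ r)
    (hcont : ContinuousOn (invSqCutoff r) (quasispectrum ℝ h)) :
    h * cfcₙ (invSqCutoff r) h * h = cfcₙ (fun t ↦ t * invSqCutoff r t * t) h := by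
  have h0 := invSqCutoff_zero hr
  rw [cfcₙ_mul _ _ h, cfcₙ_mul _ _ h, cfcₙ_id' ℝ h]

lemma isProjection_mul_cfcₙ_invSqCutoff_mul (hh : IsSelfAdjoint h) (hr : 0 ≤ r)
    (hcont : ContinuousOn (invSqCutoff r) (quasispectrum ℝ h)) :
    IsProjection (h * cfcₙ (invSqCutoff r) h * h) := by
  rw [mul_cfcₙ_invSqCutoff_mul hh hr hcont]
  refine ⟨cfcₙ_predicate (R := ℝ) _ h, ?_⟩
  rw [← cfcₙ_mul _ _ h]
  congr with t
  rw [mul_invSqCutoff_mul hr]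
  split_ifs <;> simp

lemma exists_isProjection_of_finite_quasispectrum (hh : IsSelfAdjoint h)
    (hfin : (quasispectrum ℝ h).Finite) (hr : 0 < r) :
    ∃ k : B, IsSelfAdjoint k ∧ ‖k‖ ≤ (r ^ 2)⁻¹ ∧ IsProjection (h * k * h) ∧
      ‖h * k * h * h - h‖ ≤ r := by
  have hcont : ContinuousOn (invSqCutoff r) (quasispectrum ℝ h) := hfin.continuousOn _
  have hsub : h * cfcₙ (invSqCutoff r) h * h * h - h =
      cfcₙ (fun t ↦ t * invSqCutoff r t * t * t - t) h := by
    rw [cfcₙ_sub _ _ h, cfcₙ_mul _ _ h, mul_cfcₙ_invSqCutoff_mul hh hr.le hcont, cfcₙ_id' ℝ h]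
  refine ⟨cfcₙ (invSqCutoff r) h, cfcₙ_predicate _ h,
    norm_cfcₙ_le fun t _ ↦ norm_invSqCutoff_le hr t,
    isProjection_mul_cfcₙ_invSqCutoff_mul hh hr.le hcont, ?_⟩
  rw [hsub]
  exact norm_cfcₙ_le fun t _ ↦ abs_mul_invSqCutoff_mul_mul_sub_le hr.le t

lemma abs_mul_self_sub_le_of_mem_quasispectrum (hh : IsSelfAdjoint h)
    (ht : t ∈ quasispectrum ℝ h) : |t * t - t| ≤ ‖h * h - h‖ := by
  have heq : h * h - h = cfcₙ (fun t : ℝ ↦ t * t - t) h := by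
    rw [cfcₙ_sub _ _ h, cfcₙ_mul _ _ h, cfcₙ_id' ℝ h]
  rw [heq]
  exact norm_apply_le_norm_cfcₙ (fun t : ℝ ↦ t * t - t) h ht

lemma exists_isProjection_of_norm_mul_self_sub_lt (hh : IsSelfAdjoint h)
    (hidem : ‖h * h - h‖ < 1 / 4) :
    ∃ g : B, IsProjection (h * g * h) ∧ ‖h * g * h - h‖ ≤ 2 * ‖h * h - h‖ := by
  have hspec (t : ℝ) (ht : t ∈ quasispectrum ℝ h) : |t * t - t| ≤ ‖h * h - h‖ :=
    abs_mul_self_sub_le_of_mem_quasispectrum hh ht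
  have hne (t : ℝ) (ht : t ∈ quasispectrum ℝ h) : |t| ≠ 1 / 2 := by
    intro heq
    have hlt := (hspec t ht).trans_lt hidem
    rcases eq_or_eq_neg_of_abs_eq heq with rfl | rfl <;> norm_num [abs_lt] at hlt
  have hcont : ContinuousOn (invSqCutoff (1 / 2)) (quasispectrum ℝ h) := fun t ht ↦
    (continuousAt_invSqCutoff (by norm_num) (hne t ht)).continuousWithinAt
  have hsub : h * cfcₙ (invSqCutoff (1 / 2)) h * h - h =
      cfcₙ (fun t ↦ t * invSqCutoff (1 / 2) t * t - t) h := by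
    rw [cfcₙ_sub _ _ h, mul_cfcₙ_invSqCutoff_mul hh (by norm_num) hcont, cfcₙ_id' ℝ h]
  refine ⟨cfcₙ (invSqCutoff (1 / 2)) h,
    isProjection_mul_cfcₙ_invSqCutoff_mul hh (by norm_num) hcont, ?_⟩
  rw [hsub]
  refine norm_cfcₙ_le fun t ht ↦ (abs_mul_invSqCutoff_mul_sub_le t).trans ?_
  gcongr
  exact hspec t ht

end SpectralCutoff

section NearbyProjections

lemma norm_mul_mul_sub_mul_mul_le {R : Type*} [NonUnitalSeminormedRing R] (a b k : R) :
    ‖a * k * a - b * k * b‖ ≤ ‖a - b‖ * ‖k‖ * (‖a‖ + ‖b‖) := by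
  calc ‖a * k * a - b * k * b‖ = ‖(a - b) * k * a + b * k * (a - b)‖ := by
        congr 1
        noncomm_ring
    _ ≤ ‖a - b‖ * ‖k‖ * ‖a‖ + ‖b‖ * ‖k‖ * ‖a - b‖ :=
        norm_add_le_of_le norm_mul₃_le norm_mul₃_le
    _ = ‖a - b‖ * ‖k‖ * (‖a‖ + ‖b‖) := by ring

section CStarRing

variable {B : Type*} [NonUnitalNormedRing B] [StarRing B] [CStarRing B]

lemma IsProjection.norm_le_one {q : B} (hq : IsProjection q) : ‖q‖ ≤ 1 :=
  IsStarProjection.norm_le q ⟨hq.2, hq.1⟩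

lemma IsProjection.norm_mul_self_sub_le {h q : B} (hq : IsProjection q) :
    ‖h * h - h‖ ≤ (‖h - q‖ + 3) * ‖h - q‖ := by
  have hh : ‖h‖ ≤ ‖h - q‖ + 1 := (norm_le_norm_sub_add h q).trans (by gcongr; exact hq.norm_le_one)
  calc ‖h * h - h‖ = ‖h * (h - q) + (h - q) * q - (h - q)‖ := by
        congr 1
        rw [mul_sub, sub_mul, hq.2]
        abel
    _ ≤ ‖h‖ * ‖h - q‖ + ‖h - q‖ * ‖q‖ + ‖h - q‖ :=
        norm_sub_le_of_le (norm_add_le_of_le (norm_mul_le _ _) (norm_mul_le _ _)) le_rfl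
    _ ≤ (‖h - q‖ + 1) * ‖h - q‖ + ‖h - q‖ * 1 + ‖h - q‖ := by
        gcongr
        exact hq.norm_le_one
    _ = (‖h - q‖ + 3) * ‖h - q‖ := by ring

lemma IsProjection.norm_mul_sub_le {p : B} (hp : IsProjection p) (x y : B) :
    ‖p * x - x‖ ≤ ‖p * y - y‖ + 2 * ‖x - y‖ := by
  have hpxy : ‖p * (x - y)‖ ≤ ‖x - y‖ :=
    (norm_mul_le _ _).trans (mul_le_of_le_one_left (norm_nonneg _) hp.norm_le_one)
  calc ‖p * x - x‖ = ‖p * y - y + p * (x - y) - (x - y)‖ := by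
        congr 1
        noncomm_ring
    _ ≤ ‖p * y - y‖ + ‖x - y‖ + ‖x - y‖ :=
        norm_sub_le_of_le (norm_add_le_of_le le_rfl hpxy) le_rfl
    _ = ‖p * y - y‖ + 2 * ‖x - y‖ := by ring

lemma hasApproxUnitOfProjections_herSub_s10 [PartialOrder B] {S : Set B} {a : B}
    (h : ∀ δ : ℝ, 0 < δ → ∃ p ∈ herSub S a, IsProjection p ∧ ‖p * a - a‖ < δ) :
    HasApproxUnitOfProjections (herSub S a) := by
  intro x hx _ ε hε
  obtain ⟨_, ⟨b, -, rfl⟩, hxb⟩ := Metric.mem_closure_iff.mp hx (ε / 4) (by positivity)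
  rw [dist_eq_norm] at hxb
  obtain ⟨p, hpmem, hp, hpa⟩ := h (ε / 2 / (‖b * a‖ + 1)) (by positivity)
  rw [lt_div_iff₀ (by positivity)] at hpa
  have hpaba : ‖p * (a * b * a) - a * b * a‖ ≤ ε / 2 := by
    calc ‖p * (a * b * a) - a * b * a‖ = ‖(p * a - a) * (b * a)‖ := by
          congr 1
          noncomm_ring
      _ ≤ ‖p * a - a‖ * ‖b * a‖ := norm_mul_le _ _
      _ ≤ ε / 2 := by linarith [norm_nonneg (p * a - a)]
  exact ⟨p, hpmem, hp, by linarith [hp.norm_mul_sub_le x (a * b * a)]⟩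

end CStarRing

lemma IsProjection.exists_isProjection_mul_mul_near {B : Type*} [NonUnitalCStarAlgebra B]
    {a k q : B} (hq : IsProjection q) (ha : IsSelfAdjoint a) (hk : IsSelfAdjoint k)
    (hnear : ‖a * k * a - q‖ < 1 / 16) :
    ∃ d : B, IsProjection (a * d * a) ∧ ‖a * d * a - q‖ ≤ 9 * ‖a * k * a - q‖ := by
  set h := a * k * a with h_def
  have hh : IsSelfAdjoint h := by
    simp only [isSelfAdjoint_iff, h_def, star_mul, ha.star_eq, hk.star_eq, mul_assoc]
  have hidem : ‖h * h - h‖ ≤ 4 * ‖h - q‖ :=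
    hq.norm_mul_self_sub_le.trans (by gcongr; linarith)
  obtain ⟨g, hg, hgh⟩ := exists_isProjection_of_norm_mul_self_sub_lt hh (by linarith)
  have heq : a * (k * a * g * a * k) * a = h * g * h := by simp only [h_def, mul_assoc]
  refine ⟨k * a * g * a * k, heq ▸ hg, ?_⟩
  rw [heq]
  linarith [norm_sub_le_norm_sub_add_norm_sub (h * g * h) h q]

end NearbyProjections

section FiniteSpectrum

open scoped CStarAlgebra

/-- The self-adjoint elements with finite spectrum. The quasispectrum is the spectrum in the
unitization, so that no unit is needed. -/
def selfAdjointFiniteSpectrum (B : Type*) [NonUnitalCStarAlgebra B] : Set B :=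
  {b | IsSelfAdjoint b ∧ (quasispectrum ℝ b).Finite}

variable {B : Type*} [NonUnitalCStarAlgebra B]

lemma map_mem_selfAdjointFiniteSpectrum {C : Type*} [NonUnitalCStarAlgebra C]
    (θ : C →⋆ₙₐ[ℂ] B) {c : C} (hc : c ∈ selfAdjointFiniteSpectrum C) :
    θ c ∈ selfAdjointFiniteSpectrum B :=
  ⟨hc.1.map θ, hc.2.subset (NonUnitalAlgHom.quasispectrum_apply_subset' ℂ θ c)⟩

lemma map_mem_closure_selfAdjointFiniteSpectrum {C : Type*} [NonUnitalCStarAlgebra C]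
    (θ : C →⋆ₙₐ[ℂ] B) {c : C} (hc : c ∈ closure (selfAdjointFiniteSpectrum C)) :
    θ c ∈ closure (selfAdjointFiniteSpectrum B) :=
  map_mem_closure (map_continuous θ) hc fun _ ↦ map_mem_selfAdjointFiniteSpectrum θ

lemma isSelfAdjoint_of_mem_closure_selfAdjointFiniteSpectrum {a : B}
    (ha : a ∈ closure (selfAdjointFiniteSpectrum B)) : IsSelfAdjoint a :=
  closure_minimal (fun _ hb ↦ hb.1) (isClosed_eq continuous_star continuous_id) ha

lemma AlgRealRankZero.mem_closure_selfAdjointFiniteSpectrum (hB : AlgRealRankZero B) {a : B}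
    (ha : IsSelfAdjoint a) : a ∈ closure (selfAdjointFiniteSpectrum B) := by
  refine (mem_closure_iff_nhds_basis Metric.nhds_basis_closedBall).mpr fun ε hε ↦ ?_
  obtain ⟨b, hb, hfin, hab⟩ := hB a ha ε hε
  refine ⟨b, ⟨hb, ?_⟩, mem_closedBall_iff_norm'.mpr hab⟩
  rw [← quasispectrum.preimage_algebraMap ℂ, Unitization.quasispectrum_eq_spectrum_inr]
  exact hfin.preimage (FaithfulSMul.algebraMap_injective ℝ ℂ).injOn

lemma exists_isProjection_norm_mul_sub_lt {a : B}
    (ha : a ∈ closure (selfAdjointFiniteSpectrum B)) {δ : ℝ} (hδ : 0 < δ) :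
    ∃ d : B, IsProjection (a * d * a) ∧ ‖a * d * a * a - a‖ < δ := by
  set K := ((δ / 2) ^ 2)⁻¹
  let σ : B → ℝ := fun b ↦ ‖a - b‖ * K * (‖a‖ + ‖b‖)
  have hσ : ∀ᶠ b in 𝓝 a, σ b < 1 / 16 :=
    (Continuous.tendsto (by fun_prop) a).eventually_lt_const (by simp [σ])
  have herr : ∀ᶠ b in 𝓝 a, 9 * σ b * ‖a‖ + 2 * ‖a - b‖ < δ / 2 :=
    (Continuous.tendsto (by fun_prop) a).eventually_lt_const (by simp [σ, hδ])
  obtain ⟨b, ⟨hb, hfin⟩, hσb, herrb⟩ :=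
    ((mem_closure_iff_frequently.mp ha).and_eventually (hσ.and herr)).exists
  obtain ⟨k, hk, hkK, hq, hqb⟩ := exists_isProjection_of_finite_quasispectrum hb hfin (half_pos hδ)
  have hnear : ‖a * k * a - b * k * b‖ ≤ σ b :=
    (norm_mul_mul_sub_mul_mul_le a b k).trans (by simp only [σ]; gcongr)
  obtain ⟨d, hp, hpq⟩ := hq.exists_isProjection_mul_mul_near
    (isSelfAdjoint_of_mem_closure_selfAdjointFiniteSpectrum ha) hk (hnear.trans_lt hσb)
  refine ⟨d, hp, ?_⟩
  set p := a * d * a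
  set q := b * k * b
  calc ‖p * a - a‖ = ‖(p - q) * a + (q * a - a)‖ := by
        congr 1
        noncomm_ring
    _ ≤ 9 * σ b * ‖a‖ + (δ / 2 + 2 * ‖a - b‖) := by
        refine norm_add_le_of_le ((norm_mul_le _ _).trans ?_) ((hq.norm_mul_sub_le a b).trans ?_)
        · gcongr
          exact hpq.trans (by gcongr)
        · gcongr
    _ < δ := by linarith

lemma inclusionRealRankZero_of_mem_closure_selfAdjointFiniteSpectrum [PartialOrder B] {A : Set B}
    (hA : ∀ a ∈ A, 0 ≤ a → a ∈ closure (selfAdjointFiniteSpectrum B)) :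
    InclusionRealRankZero A Set.univ := by
  intro a haA ha0 _
  refine hasApproxUnitOfProjections_herSub_s10 fun δ hδ ↦ ?_
  obtain ⟨d, hp, hpa⟩ := exists_isProjection_norm_mul_sub_lt (hA a haA ha0) hδ
  exact ⟨a * d * a, subset_closure ⟨d, Set.mem_univ d, rfl⟩, hp, hpa⟩

end FiniteSpectrum

section MultiplierConjugation

section Ideal

variable {𝕜 B : Type*} [NontriviallyNormedField 𝕜] [NonUnitalNormedRing B] [StarRing B]
  [CStarRing B] [NormedSpace 𝕜 B] [SMulCommClass 𝕜 B B] [IsScalarTower 𝕜 B B]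

lemma doubleCentralizer_eq_of_fst_eq {m n : 𝓜(𝕜, B)} (h : m.fst = n.fst) : m = n := by
  rw [← sub_eq_zero, ← norm_eq_zero, ← DoubleCentralizer.norm_fst, DoubleCentralizer.sub_fst, h,
    sub_self, norm_zero]

lemma doubleCentralizer_eq_of_snd_eq {m n : 𝓜(𝕜, B)} (h : m.snd = n.snd) : m = n := by
  rw [← sub_eq_zero, ← norm_eq_zero, ← DoubleCentralizer.norm_snd, DoubleCentralizer.sub_snd, h,
    sub_self, norm_zero]

lemma doubleCentralizer_mul_coe (m : 𝓜(𝕜, B)) (x : B) :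
    m * (x : 𝓜(𝕜, B)) = (m.fst x : B) :=
  doubleCentralizer_eq_of_snd_eq (ContinuousLinearMap.ext fun y ↦ m.central y x)

lemma coe_mul_doubleCentralizer (x : B) (m : 𝓜(𝕜, B)) :
    (x : 𝓜(𝕜, B)) * m = (m.snd x : B) :=
  doubleCentralizer_eq_of_fst_eq (ContinuousLinearMap.ext fun y ↦ (m.central x y).symm)

end Ideal

variable {𝕜 B : Type*} [DenselyNormedField 𝕜] [StarRing 𝕜] [NonUnitalNormedRing B] [StarRing B]
  [CStarRing B] [NormedSpace 𝕜 B] [SMulCommClass 𝕜 B B] [IsScalarTower 𝕜 B B] [StarModule 𝕜 B]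

lemma isometry_doubleCentralizer_coeHom :
    Isometry (DoubleCentralizer.coeHom : B →⋆ₙₐ[𝕜] 𝓜(𝕜, B)) :=
  AddMonoidHomClass.isometry_of_norm _ fun b ↦ by
    rw [DoubleCentralizer.coeHom_apply, ← DoubleCentralizer.norm_fst, DoubleCentralizer.coe_fst,
      ContinuousLinearMap.opNorm_mul_apply]

lemma conjStarAlgAut_coe_mem_range (u : unitary 𝓜(𝕜, B)) (x : B) :
    Unitary.conjStarAlgAut 𝕜 𝓜(𝕜, B) u (DoubleCentralizer.coeHom x) ∈
      NonUnitalStarAlgHom.range (DoubleCentralizer.coeHom : B →⋆ₙₐ[𝕜] 𝓜(𝕜, B)) := by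
  refine ⟨(star (u : 𝓜(𝕜, B))).snd ((u : 𝓜(𝕜, B)).fst x), ?_⟩
  rw [Unitary.conjStarAlgAut_apply, DoubleCentralizer.coeHom_apply, doubleCentralizer_mul_coe,
    coe_mul_doubleCentralizer]
  rfl

/-- The action `x ↦ u * x * star u` on `B` of a unitary multiplier `u` of `B`. -/
noncomputable def multiplierConj (u : unitary 𝓜(𝕜, B)) : B →⋆ₙₐ[𝕜] B :=
  ((StarAlgEquiv.ofInjective' (DoubleCentralizer.coeHom : B →⋆ₙₐ[𝕜] 𝓜(𝕜, B))
    isometry_doubleCentralizer_coeHom.injective).symm : _ →⋆ₙₐ[𝕜] B).comp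
  (NonUnitalStarAlgHom.codRestrict
    ((Unitary.conjStarAlgAut 𝕜 𝓜(𝕜, B) u : 𝓜(𝕜, B) →⋆ₙₐ[𝕜] 𝓜(𝕜, B)).comp
      DoubleCentralizer.coeHom) _ (conjStarAlgAut_coe_mem_range u))

lemma coe_multiplierConj (u : unitary 𝓜(𝕜, B)) (x : B) :
    (multiplierConj u x : 𝓜(𝕜, B)) = u * (x : 𝓜(𝕜, B)) * star (u : 𝓜(𝕜, B)) :=
  congrArg Subtype.val ((StarAlgEquiv.ofInjective'
    (DoubleCentralizer.coeHom : B →⋆ₙₐ[𝕜] 𝓜(𝕜, B))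
    isometry_doubleCentralizer_coeHom.injective).apply_symm_apply
      ⟨_, conjStarAlgAut_coe_mem_range u x⟩)

lemma tendsto_multiplierConj_iff {ι : Type*} {l : Filter ι} {u : ι → unitary 𝓜(𝕜, B)} {x a : B} :
    Tendsto (fun i ↦ multiplierConj (u i) x) l (𝓝 a) ↔
      Tendsto (fun i ↦ u i * (x : 𝓜(𝕜, B)) * star (u i : 𝓜(𝕜, B))) l (𝓝 (a : 𝓜(𝕜, B))) := by
  simp only [← coe_multiplierConj]
  exact (isometry_doubleCentralizer_coeHom (𝕜 := 𝕜)).isEmbedding.tendsto_nhds_iff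

end MultiplierConjugation

open scoped ComplexStarModule

lemma tendsto_map_realPart {B C F ι : Type*} [AddCommGroup B] [Module ℂ B] [StarAddMonoid B]
    [StarModule ℂ B] [TopologicalSpace B] [ContinuousAdd B] [ContinuousStar B]
    [ContinuousConstSMul ℝ B] [AddCommGroup C] [Module ℂ C] [StarAddMonoid C] [StarModule ℂ C]
    [FunLike F C B] [StarHomClass F C B] [LinearMapClass F ℂ C B] {l : Filter ι} {θ : ι → F}
    {c : C} {a : B} (ha : IsSelfAdjoint a) (h : Tendsto (fun i ↦ θ i c) l (𝓝 a)) :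
    Tendsto (fun i ↦ θ i (ℜ c : C)) l (𝓝 a) := by
  have hcont : Continuous fun b : B ↦ (ℜ b : B) := by
    simp only [realPart_apply_coe]
    fun_prop
  simpa only [map_realPart, ha.coe_realPart, Function.comp_def] using (hcont.tendsto a).comp h

theorem stmt10_general {B : Type*} [NonUnitalCStarAlgebra B] [PartialOrder B] [StarOrderedRing B]
    (A : Set B) {C : Type*} [NonUnitalCStarAlgebra C] (hC : AlgRealRankZero C)
    (ψ : A → C) (φ : C →⋆ₙₐ[ℂ] B)
    {ι : Type*} (l : Filter ι) [l.NeBot]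
    (u : ι → 𝓜(ℂ, B)) (hu : ∀ i, u i ∈ unitary 𝓜(ℂ, B))
    (hconv : ∀ a : A, Tendsto (fun i ↦ u i * (φ (ψ a) : 𝓜(ℂ, B)) * star (u i)) l
      (𝓝 ((a : B) : 𝓜(ℂ, B)))) :
    InclusionRealRankZero A Set.univ := by
  refine inclusionRealRankZero_of_mem_closure_selfAdjointFiniteSpectrum fun a haA ha0 ↦ ?_
  let θ (i : ι) : C →⋆ₙₐ[ℂ] B := (multiplierConj ⟨u i, hu i⟩).comp φ
  have hθ : Tendsto (fun i ↦ θ i (ψ ⟨a, haA⟩)) l (𝓝 a) :=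
    tendsto_multiplierConj_iff.mpr (hconv ⟨a, haA⟩)
  have hθre : Tendsto (fun i ↦ θ i (ℜ (ψ ⟨a, haA⟩) : C)) l (𝓝 a) :=
    tendsto_map_realPart (.of_nonneg ha0) hθ
  exact isClosed_closure.mem_of_tendsto hθre <| .of_forall fun i ↦
    map_mem_closure_selfAdjointFiniteSpectrum (θ i)
      (hC.mem_closure_selfAdjointFiniteSpectrum (ℜ (ψ ⟨a, haA⟩)).2)

theorem stmt10 {B : Type*} [NonUnitalCStarAlgebra B] [PartialOrder B] [StarOrderedRing B]
    (A : NonUnitalStarSubalgebra ℂ B) (hA : IsClosed (A : Set B))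
    {C : Type*} [NonUnitalCStarAlgebra C] (hC : AlgRealRankZero C)
    (ψ : A →⋆ₙₐ[ℂ] C) (φ : C →⋆ₙₐ[ℂ] B)
    {ι : Type*} (l : Filter ι) [l.NeBot]
    (u : ι → 𝓜(ℂ, B)) (hu : ∀ i, u i ∈ unitary 𝓜(ℂ, B))
    (hconv : ∀ a : A, Tendsto (fun i => u i * (φ (ψ a) : 𝓜(ℂ, B)) * star (u i)) l
      (nhds ((a : B) : 𝓜(ℂ, B)))) :
    InclusionRealRankZero (A : Set B) (Set.univ : Set B) :=
  stmt10_general (A : Set B) hC ψ φ l u hu hconv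
end
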